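/- Fix nonnegative reals m₀₀, m₁₁, m₂₂, m₃₃ summing to 1 and e_x, e_y ∈ [0,1], and let S be the set of two-qubit density matrices ρ with diagonal (m₀₀, m₁₁, m₂₂, m₃₃) in the computational basis, Tr(Π_x⁻ρ) = e_x and Tr(Π_y⁻ρ) = e_y. Let τ be the 4×4 matrix with diagonal (m₀₀, m₁₁, m₂₂, m₃₃), entry (1−e_x−e_y)/2 at positions (|00⟩,|11⟩) and (|11⟩,|00⟩), entry (e_y−e_x)/2 at positions (|01⟩,|10⟩) and (|10⟩,|01⟩), and zeros elsewhere. If S is nonempty, then τ ∈ S and C(Φ(ρ)) ≥ C(τ) for every ρ ∈ S; hence min_{ρ∈S} C(Φ(ρ)) = C(τ), giving the improved six-state key rate K = C(τ) − H(e_z) with e_z = m₁₁ + m₂₂. -/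

import Mathlib

/-!
Dephasing leaves a direct sum of two 2×2 blocks, on `|00⟩, |11⟩` and on `|01⟩, |10⟩`. For a density
matrix, the error rates `e_x`, `e_y` are equivalent to prescribing the real parts
`(1 - e_x - e_y) / 2` and `(e_y - e_x) / 2` of the two off-diagonal entries of these blocks
(`re_coherences`). So for every feasible `ρ` the matrix `τ` is the entrywise real part
`(Φ(ρ) + Φ(ρ)ᵀ) / 2` of `Φ(ρ)` (`rhoGen_eq`), which makes it positive semidefinite, hence feasible,
and `Φ(τ) = τ`.

Since `τ` and `Φ(ρ)` have the same diagonal, the claim is `S(Φ(ρ)) ≤ S(τ)`. A block with diagonal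
`p, q` and off-diagonal entry `x` has eigenvalues `(p + q ± r) / 2` with
`r = √((p - q)² + 4|x|²)`, so the entropy is explicit (`vnEntropy_dephase`). Replacing `x` by its
real part shrinks `r` at fixed trace, which raises the entropy of the block by concavity of
`-x log x` (`blockEntropy_anti`).
-/

open Matrix Complex Kronecker
open scoped ComplexOrder

noncomputable section

/-- von Neumann entropy (base 2), via eigenvalues; junk value 0 if not Hermitian. -/
noncomputable def vnEntropy {n : Type*} [Fintype n] [DecidableEq n] (ρ : Matrix n n ℂ) : ℝ :=
  if h : ρ.IsHermitian then -∑ i, h.eigenvalues i * Real.logb 2 (h.eigenvalues i) else 0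

/-- The diagonal part of a matrix. -/
def diagPart {n : Type*} [Fintype n] [DecidableEq n] (ρ : Matrix n n ℂ) : Matrix n n ℂ :=
  Matrix.diagonal fun i => ρ i i

/-- Relative entropy of coherence in the computational basis. -/
noncomputable def relEntCoh {n : Type*} [Fintype n] [DecidableEq n] (ρ : Matrix n n ℂ) : ℝ :=
  vnEntropy (diagPart ρ) - vnEntropy ρ

/-- A density matrix: positive semidefinite with trace one. -/
def IsDensity {n : Type*} [Fintype n] [DecidableEq n] (ρ : Matrix n n ℂ) : Prop :=
  ρ.PosSemidef ∧ ρ.trace = 1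

/-- Two-qubit index type: the first component is qubit A, the second is qubit B. -/
abbrev Q2 := Fin 2 × Fin 2

/-- Z-parity projector Π⁺ = |00⟩⟨00| + |11⟩⟨11|. -/
def PiPlus : Matrix Q2 Q2 ℂ := Matrix.diagonal fun i => if i.1 = i.2 then 1 else 0

/-- Z-parity projector Π⁻ = |01⟩⟨01| + |10⟩⟨10|. -/
def PiMinus : Matrix Q2 Q2 ℂ := Matrix.diagonal fun i => if i.1 = i.2 then 0 else 1

/-- Partial dephasing channel Φ(ρ) = Π⁺ρΠ⁺ + Π⁻ρΠ⁻. -/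
def dephase (ρ : Matrix Q2 Q2 ℂ) : Matrix Q2 Q2 ℂ :=
  PiPlus * ρ * PiPlus + PiMinus * ρ * PiMinus

/-- Binary entropy (base 2). -/
noncomputable def binEnt (e : ℝ) : ℝ := -(e * Real.logb 2 e) - (1 - e) * Real.logb 2 (1 - e)

/-- X-basis projector Π_x⁻ = |+−⟩⟨+−| + |−+⟩⟨−+|, written entrywise. -/
def PiXMinus : Matrix Q2 Q2 ℂ :=
  Matrix.of fun i j => (1/4 : ℂ) *
    ((if i.1 = j.1 then 1 else -1) + (if i.2 = j.2 then 1 else -1))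

/-- phase i^a for a : Fin 2 -/
def yph : Fin 2 → ℂ := fun a => if a = 0 then 1 else Complex.I

/-- Y-basis projector Π_y⁻ = |+i,+i⟩⟨+i,+i| + |−i,−i⟩⟨−i,−i|, written entrywise. -/
def PiYMinus : Matrix Q2 Q2 ℂ :=
  Matrix.of fun i j => (1/4 : ℂ) *
    (yph i.1 * yph i.2 * star (yph j.1) * star (yph j.2)
      + star (yph i.1) * star (yph i.2) * yph j.1 * yph j.2)

/-- The matrix ρ(a,b): diagonal (m00,m11,m22,m33), entry a between |00⟩,|11⟩,
entry b between |01⟩,|10⟩, zeros elsewhere. -/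
def rhoGen (m00 m11 m22 m33 a b : ℝ) : Matrix Q2 Q2 ℂ :=
  Matrix.of fun i j =>
    if i = j then
      (if i = (0, 0) then (m00 : ℂ) else if i = (0, 1) then (m11 : ℂ)
        else if i = (1, 0) then (m22 : ℂ) else (m33 : ℂ))
    else if (i = ((0 : Fin 2), (0 : Fin 2)) ∧ j = (1, 1)) ∨ (i = (1, 1) ∧ j = (0, 0)) then (a : ℂ)
    else if (i = ((0 : Fin 2), (1 : Fin 2)) ∧ j = (1, 0)) ∨ (i = (1, 0) ∧ j = (0, 1)) then (b : ℂ)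
    else 0

/-- The Bell-diagonal state with weights p0,p1,p2,p3 on |Φ⁺⟩,|Φ⁻⟩,|Ψ⁺⟩,|Ψ⁻⟩. -/
def bellDiag (p0 p1 p2 p3 : ℝ) : Matrix Q2 Q2 ℂ :=
  rhoGen ((p0 + p1)/2) ((p2 + p3)/2) ((p2 + p3)/2) ((p0 + p1)/2) ((p0 - p1)/2) ((p2 - p3)/2)

/-- Partial trace over the first qubit (A). -/
def trA (M : Matrix Q2 Q2 ℂ) : Matrix (Fin 2) (Fin 2) ℂ :=
  Matrix.of fun j j' => ∑ i : Fin 2, M (i, j) (i, j')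

/-- Partial trace over the second qubit (B). -/
def trB (M : Matrix Q2 Q2 ℂ) : Matrix (Fin 2) (Fin 2) ℂ :=
  Matrix.of fun i i' => ∑ j : Fin 2, M (i, j) (i', j)

/-- Coherence-based key-rate functional K(ρ) = C(Φ(ρ)) − H(Tr(Π⁻ρ)). -/
noncomputable def keyRate (ρ : Matrix Q2 Q2 ℂ) : ℝ :=
  relEntCoh (dephase ρ) - binEnt ((PiMinus * ρ).trace.re)

/-- Outer product |ψ⟩⟨ψ|. -/
def outer (ψ : Q2 → ℂ) : Matrix Q2 Q2 ℂ := Matrix.of fun i j => ψ i * star (ψ j)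

/-- Basis-optimized key rate: supremum of K over all local basis changes. -/
noncomputable def Km (ρ : Matrix Q2 Q2 ℂ) : ℝ :=
  sSup {x : ℝ | ∃ U V : Matrix (Fin 2) (Fin 2) ℂ, U ∈ Matrix.unitaryGroup (Fin 2) ℂ ∧
    V ∈ Matrix.unitaryGroup (Fin 2) ℂ ∧ x = keyRate ((U ⊗ₖ V) * ρ * (U ⊗ₖ V)ᴴ)}



/-! ### Entropy of a 2×2 block -/

/-- The entropy, in bits, contributed by a 2×2 positive block with trace `s` and eigenvalue
gap `r`, that is, with eigenvalues `(s ± r) / 2`. -/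
def blockEntropy (s r : ℝ) : ℝ :=
  (Real.negMulLog ((s + r) / 2) + Real.negMulLog ((s - r) / 2)) / Real.log 2

/-- At fixed trace, spreading the two eigenvalues apart lowers the entropy: the pair with the
smaller gap consists of two mirrored convex combinations of the pair with the larger gap, so this
is concavity of `x ↦ -x log x` on `[0, ∞)`. -/
lemma blockEntropy_anti {s r r' : ℝ} (h0 : 0 ≤ r') (h1 : r' ≤ r) (h2 : r ≤ s) :
    blockEntropy s r ≤ blockEntropy s r' := by
  unfold blockEntropy
  have hl : 0 < Real.log 2 := Real.log_pos (by norm_num)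
  rcases (h0.trans h1).eq_or_lt with h | h
  · have : r' = r := by linarith
    rw [this]
  gcongr ?_ / _
  have hp : (s + r) / 2 ∈ Set.Ici (0 : ℝ) := by simp only [Set.mem_Ici]; linarith
  have hm : (s - r) / 2 ∈ Set.Ici (0 : ℝ) := by simp only [Set.mem_Ici]; linarith
  -- The weights with `(s ± r') / 2` as combinations of `(s + r) / 2` and `(s - r) / 2`.
  have ht : 0 ≤ (r + r') / (2 * r) := by positivity
  have ht' : 0 ≤ (r - r') / (2 * r) := div_nonneg (by linarith) (by linarith)
  have hs : (r + r') / (2 * r) + (r - r') / (2 * r) = 1 := by field_simp; ring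
  have hs' : (r - r') / (2 * r) + (r + r') / (2 * r) = 1 := by field_simp; ring
  have e1 := Real.concaveOn_negMulLog.2 hp hm ht ht' hs
  have e2 := Real.concaveOn_negMulLog.2 hp hm ht' ht hs'
  simp only [smul_eq_mul] at e1 e2
  have k1 : (r + r') / (2 * r) * ((s + r) / 2) + (r - r') / (2 * r) * ((s - r) / 2)
      = (s + r') / 2 := by field_simp; ring
  have k2 : (r - r') / (2 * r) * ((s + r) / 2) + (r + r') / (2 * r) * ((s - r) / 2)
      = (s - r') / 2 := by field_simp; ring
  rw [k1] at e1
  rw [k2] at e2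
  have : ∀ x y : ℝ, x + y = ((r + r') / (2 * r) * x + (r - r') / (2 * r) * y)
      + ((r - r') / (2 * r) * x + (r + r') / (2 * r) * y) := fun x y => by
    field_simp; ring
  rw [this]
  exact add_le_add e1 e2

/-- The gap between the two eigenvalues of the Hermitian matrix `!![p, x; star x, q]`. -/
def gap (p q : ℝ) (x : ℂ) : ℝ := Real.sqrt ((p - q) ^ 2 + 4 * Complex.normSq x)

lemma gap_le {p q : ℝ} {x : ℂ} (hp : 0 ≤ p) (hq : 0 ≤ q) (h : Complex.normSq x ≤ p * q) :
    gap p q x ≤ p + q :=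
  Real.sqrt_le_iff.2 ⟨by positivity, by nlinarith⟩

/-- Dropping the imaginary part of the coherence narrows the gap. -/
lemma gap_re_le (p q : ℝ) (x : ℂ) : gap p q (x.re : ℂ) ≤ gap p q x := by
  refine Real.sqrt_le_sqrt ?_
  simp only [Complex.normSq_apply, Complex.ofReal_re, Complex.ofReal_im]
  nlinarith [mul_self_nonneg x.im]

/-- Reads the entropy off a factorization of the characteristic polynomial, whose roots are the
eigenvalues with multiplicity. -/
lemma vnEntropy_of_charpoly {n : Type*} [Fintype n] [DecidableEq n] {M : Matrix n n ℂ}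
    (hM : M.IsHermitian) (l : Multiset ℝ)
    (h : M.charpoly = (l.map fun x : ℝ => Polynomial.X - Polynomial.C (x : ℂ)).prod) :
    vnEntropy M = (l.map Real.negMulLog).sum / Real.log 2 := by
  have hr := hM.roots_charpoly_eq_eigenvalues
  have h2 : M.charpoly.roots = l.map (fun x : ℝ => (x : ℂ)) := by
    rw [h, ← Polynomial.roots_multiset_prod_X_sub_C (l.map (fun x : ℝ => (x : ℂ))),
      Multiset.map_map]
    rfl
  rw [h2] at hr
  have h3 := congrArg (fun t => (t.map (fun z : ℂ => Real.negMulLog z.re)).sum) hr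
  simp only [Multiset.map_map, Function.comp_def, Complex.ofReal_re] at h3
  rw [vnEntropy, dif_pos hM, h3, Finset.sum_map_val]
  rw [Finset.sum_div, ← Finset.sum_neg_distrib]
  refine Finset.sum_congr rfl fun i _ => ?_
  simp [Real.negMulLog, Real.logb]
  ring

/-! ### The dephased state -/

lemma dephase_apply (ρ : Matrix Q2 Q2 ℂ) (i j : Q2) :
    dephase ρ i j = if (i.1 = i.2 ↔ j.1 = j.2) then ρ i j else 0 := by
  simp only [dephase, PiPlus, PiMinus, Matrix.add_apply, Matrix.mul_diagonal,
    Matrix.diagonal_mul]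
  split_ifs <;> simp_all

lemma dephase_posSemidef {ρ : Matrix Q2 Q2 ℂ} (h : ρ.PosSemidef) : (dephase ρ).PosSemidef := by
  have hp : PiPlusᴴ = PiPlus := by
    simp only [PiPlus, Matrix.diagonal_conjTranspose]
    congr 1; ext i; simp
  have hm : PiMinusᴴ = PiMinus := by
    simp only [PiMinus, Matrix.diagonal_conjTranspose]
    congr 1; ext i; simp
  have h1 := h.conjTranspose_mul_mul_same PiPlus
  have h2 := h.conjTranspose_mul_mul_same PiMinus
  rw [hp] at h1
  rw [hm] at h2
  exact h1.add h2

/-- Nonnegativity of the principal 2×2 minors. -/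
lemma normSq_le_of_posSemidef {n : Type*} [Fintype n] [DecidableEq n] {ρ : Matrix n n ℂ}
    (h : ρ.PosSemidef) (i j : n) : Complex.normSq (ρ i j) ≤ (ρ i i).re * (ρ j j).re := by
  have h1 := (h.submatrix ![i, j]).det_nonneg
  have hi := h.1.apply i i
  have hj := h.1.apply j j
  have hij := h.1.apply i j
  rw [Matrix.det_fin_two] at h1
  simp only [Matrix.submatrix_apply, Matrix.cons_val_zero, Matrix.cons_val_one] at h1
  rw [← hij] at h1 ⊢
  have h2 := (Complex.le_def.1 h1).1
  have := congrArg Complex.im hi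
  have := congrArg Complex.im hj
  simp [Complex.normSq_apply] at *
  nlinarith

lemma charpoly_dephase (ρ : Matrix Q2 Q2 ℂ) :
    (dephase ρ).charpoly =
      (Polynomial.X ^ 2 - Polynomial.C (ρ (0,0) (0,0) + ρ (1,1) (1,1)) * Polynomial.X
        + Polynomial.C (ρ (0,0) (0,0) * ρ (1,1) (1,1) - ρ (0,0) (1,1) * ρ (1,1) (0,0))) *
      (Polynomial.X ^ 2 - Polynomial.C (ρ (0,1) (0,1) + ρ (1,0) (1,0)) * Polynomial.X
        + Polynomial.C (ρ (0,1) (0,1) * ρ (1,0) (1,0) - ρ (0,1) (1,0) * ρ (1,0) (0,1))) := by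
  rw [Matrix.charpoly, ← Matrix.det_reindex_self finProdFinEquiv]
  have e0 : finProdFinEquiv.symm (0 : Fin (2*2)) = ((0 : Fin 2), (0 : Fin 2)) := rfl
  have e1 : finProdFinEquiv.symm (1 : Fin (2*2)) = ((0 : Fin 2), (1 : Fin 2)) := rfl
  have e2 : finProdFinEquiv.symm (2 : Fin (2*2)) = ((1 : Fin 2), (0 : Fin 2)) := rfl
  have e3 : finProdFinEquiv.symm (3 : Fin (2*2)) = ((1 : Fin 2), (1 : Fin 2)) := rfl
  have key : (Matrix.reindex finProdFinEquiv finProdFinEquiv) (dephase ρ).charmatrix =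
    !![Polynomial.X - Polynomial.C (ρ (0,0) (0,0)), 0, 0, - Polynomial.C (ρ (0,0) (1,1));
       0, Polynomial.X - Polynomial.C (ρ (0,1) (0,1)), - Polynomial.C (ρ (0,1) (1,0)), 0;
       0, - Polynomial.C (ρ (1,0) (0,1)), Polynomial.X - Polynomial.C (ρ (1,0) (1,0)), 0;
       - Polynomial.C (ρ (1,1) (0,0)), 0, 0, Polynomial.X - Polynomial.C (ρ (1,1) (1,1))] := by
    ext1 i j
    rw [Matrix.reindex_apply, Matrix.submatrix_apply]
    fin_cases i <;> fin_cases j <;>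
      simp [e0, e1, e2, e3, dephase_apply]
  rw [key]
  simp [Matrix.det_succ_row_zero, Fin.sum_univ_succ, Fin.succAbove]
  ring

/-- The characteristic polynomial of `!![p, x; star x, q]` splits over the reals. -/
lemma quad_factor (p q : ℝ) (x : ℂ) :
    (Polynomial.X ^ 2 - Polynomial.C ((p : ℂ) + q) * Polynomial.X
        + Polynomial.C ((p : ℂ) * q - x * star x)) =
      (Polynomial.X - Polynomial.C (((p + q + gap p q x) / 2 : ℝ) : ℂ)) *
      (Polynomial.X - Polynomial.C (((p + q - gap p q x) / 2 : ℝ) : ℂ)) := by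
  have hg : gap p q x ^ 2 = (p - q) ^ 2 + 4 * Complex.normSq x :=
    Real.sq_sqrt (by have := Complex.normSq_nonneg x; positivity)
  have hx : x * star x = ((Complex.normSq x : ℝ) : ℂ) := Complex.mul_conj x
  have h1 : ((p : ℂ) + q) = (((p + q + gap p q x) / 2 : ℝ) : ℂ)
      + (((p + q - gap p q x) / 2 : ℝ) : ℂ) := by
    push_cast; ring
  have h2 : ((p : ℂ) * q - x * star x) = (((p + q + gap p q x) / 2 : ℝ) : ℂ)
      * (((p + q - gap p q x) / 2 : ℝ) : ℂ) := by
    rw [hx]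
    norm_cast
    nlinarith
  rw [h1, h2, Polynomial.C_add, Polynomial.C_mul]
  ring

lemma vnEntropy_dephase {ρ : Matrix Q2 Q2 ℂ} (h : ρ.PosSemidef) {m00 m11 m22 m33 : ℝ}
    (h0 : ρ (0,0) (0,0) = (m00 : ℂ)) (h1 : ρ (0,1) (0,1) = (m11 : ℂ))
    (h2 : ρ (1,0) (1,0) = (m22 : ℂ)) (h3 : ρ (1,1) (1,1) = (m33 : ℂ)) :
    vnEntropy (dephase ρ) = blockEntropy (m00 + m33) (gap m00 m33 (ρ (0,0) (1,1)))
      + blockEntropy (m11 + m22) (gap m11 m22 (ρ (0,1) (1,0))) := by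
  rw [vnEntropy_of_charpoly (dephase_posSemidef h).1
    {(m00 + m33 + gap m00 m33 (ρ (0,0) (1,1))) / 2, (m00 + m33 - gap m00 m33 (ρ (0,0) (1,1))) / 2,
     (m11 + m22 + gap m11 m22 (ρ (0,1) (1,0))) / 2, (m11 + m22 - gap m11 m22 (ρ (0,1) (1,0))) / 2}]
  · simp only [blockEntropy, Multiset.insert_eq_cons, Multiset.map_cons, Multiset.map_singleton,
      Multiset.sum_cons, Multiset.sum_singleton]
    ring
  · rw [charpoly_dephase, ← h.1.apply (1,1) (0,0), ← h.1.apply (1,0) (0,1), h0, h1, h2, h3,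
      quad_factor, quad_factor]
    simp only [Multiset.insert_eq_cons, Multiset.map_cons, Multiset.map_singleton,
      Multiset.prod_cons, Multiset.prod_singleton]
    ring

/-! ### The constraints and the state τ -/

lemma trace_PiXMinus_mul (ρ : Matrix Q2 Q2 ℂ) :
    (PiXMinus * ρ).trace = (ρ.trace - (ρ (0,0) (1,1) + ρ (1,1) (0,0))
      - (ρ (0,1) (1,0) + ρ (1,0) (0,1))) / 2 := by
  simp [Matrix.trace, Matrix.mul_apply, Fintype.sum_prod_type, PiXMinus]
  ring

lemma trace_PiYMinus_mul (ρ : Matrix Q2 Q2 ℂ) :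
    (PiYMinus * ρ).trace = (ρ.trace - (ρ (0,0) (1,1) + ρ (1,1) (0,0))
      + (ρ (0,1) (1,0) + ρ (1,0) (0,1))) / 2 := by
  simp [Matrix.trace, Matrix.mul_apply, Fintype.sum_prod_type, PiYMinus, yph]
  ring_nf

/-- The two error rates fix precisely the real parts of the two coherences that survive
dephasing. -/
lemma re_coherences {ρ : Matrix Q2 Q2 ℂ} (h : IsDensity ρ) {ex ey : ℝ}
    (hx : (PiXMinus * ρ).trace = (ex : ℂ)) (hy : (PiYMinus * ρ).trace = (ey : ℂ)) :
    (ρ (0,0) (1,1)).re = (1 - ex - ey) / 2 ∧ (ρ (0,1) (1,0)).re = (ey - ex) / 2 := by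
  rw [trace_PiXMinus_mul, h.2, ← h.1.1.apply (1,1) (0,0), ← h.1.1.apply (1,0) (0,1)] at hx
  rw [trace_PiYMinus_mul, h.2, ← h.1.1.apply (1,1) (0,0), ← h.1.1.apply (1,0) (0,1)] at hy
  have hx' := congrArg Complex.re hx
  have hy' := congrArg Complex.re hy
  simp at hx' hy'
  constructor <;> linarith

/-- The candidate minimizer is the entrywise real part of any dephased feasible state; written as
an average with the transpose, it is visibly positive semidefinite. -/
lemma rhoGen_eq {ρ : Matrix Q2 Q2 ℂ} (h : ρ.IsHermitian) {m00 m11 m22 m33 a b : ℝ}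
    (h0 : ρ (0,0) (0,0) = (m00 : ℂ)) (h1 : ρ (0,1) (0,1) = (m11 : ℂ))
    (h2 : ρ (1,0) (1,0) = (m22 : ℂ)) (h3 : ρ (1,1) (1,1) = (m33 : ℂ))
    (ha : (ρ (0,0) (1,1)).re = a) (hb : (ρ (0,1) (1,0)).re = b) :
    rhoGen m00 m11 m22 m33 a b = (1 / 2 : ℝ) • (dephase ρ + (dephase ρ)ᵀ) := by
  have e1 := h.apply (1,1) (0,0)
  have e2 := h.apply (1,0) (0,1)
  ext ⟨i1, i2⟩ ⟨j1, j2⟩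
  fin_cases i1 <;> fin_cases i2 <;> fin_cases j1 <;> fin_cases j2 <;>
    simp [rhoGen, dephase_apply, h0, h1, h2, h3, ← e1, ← e2, ← ha, ← hb] <;>
    apply Complex.ext <;> simp <;> ring

lemma dephase_rhoGen (m00 m11 m22 m33 a b : ℝ) :
    dephase (rhoGen m00 m11 m22 m33 a b) = rhoGen m00 m11 m22 m33 a b := by
  ext ⟨i1, i2⟩ ⟨j1, j2⟩
  rw [dephase_apply]
  fin_cases i1 <;> fin_cases i2 <;> fin_cases j1 <;> fin_cases j2 <;> simp [rhoGen]

/-- improved six-state key rate: τ is the minimizer of C(Φ(ρ)) over S. -/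
theorem stmt_8 (m00 m11 m22 m33 ex ey : ℝ)
    (h00 : 0 ≤ m00) (h11 : 0 ≤ m11) (h22 : 0 ≤ m22) (h33 : 0 ≤ m33)
    (hsum : m00 + m11 + m22 + m33 = 1)
    (hex0 : 0 ≤ ex) (hex1 : ex ≤ 1) (hey0 : 0 ≤ ey) (hey1 : ey ≤ 1)
    (hne : ∃ ρ : Matrix Q2 Q2 ℂ, IsDensity ρ ∧
      ρ (0,0) (0,0) = (m00 : ℂ) ∧ ρ (0,1) (0,1) = (m11 : ℂ) ∧
      ρ (1,0) (1,0) = (m22 : ℂ) ∧ ρ (1,1) (1,1) = (m33 : ℂ) ∧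
      (PiXMinus * ρ).trace = (ex : ℂ) ∧ (PiYMinus * ρ).trace = (ey : ℂ)) :
    (IsDensity (rhoGen m00 m11 m22 m33 ((1 - ex - ey)/2) ((ey - ex)/2)) ∧
      (PiXMinus * rhoGen m00 m11 m22 m33 ((1 - ex - ey)/2) ((ey - ex)/2)).trace = (ex : ℂ) ∧
      (PiYMinus * rhoGen m00 m11 m22 m33 ((1 - ex - ey)/2) ((ey - ex)/2)).trace = (ey : ℂ)) ∧
    (∀ ρ : Matrix Q2 Q2 ℂ, IsDensity ρ →
      ρ (0,0) (0,0) = (m00 : ℂ) → ρ (0,1) (0,1) = (m11 : ℂ) →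
      ρ (1,0) (1,0) = (m22 : ℂ) → ρ (1,1) (1,1) = (m33 : ℂ) →
      (PiXMinus * ρ).trace = (ex : ℂ) → (PiYMinus * ρ).trace = (ey : ℂ) →
      relEntCoh (rhoGen m00 m11 m22 m33 ((1 - ex - ey)/2) ((ey - ex)/2)) ≤
        relEntCoh (dephase ρ)) ∧
    IsLeast {x : ℝ | ∃ ρ : Matrix Q2 Q2 ℂ, IsDensity ρ ∧
        ρ (0,0) (0,0) = (m00 : ℂ) ∧ ρ (0,1) (0,1) = (m11 : ℂ) ∧
        ρ (1,0) (1,0) = (m22 : ℂ) ∧ ρ (1,1) (1,1) = (m33 : ℂ) ∧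
        (PiXMinus * ρ).trace = (ex : ℂ) ∧ (PiYMinus * ρ).trace = (ey : ℂ) ∧
        x = relEntCoh (dephase ρ) - binEnt (m11 + m22)}
      (relEntCoh (rhoGen m00 m11 m22 m33 ((1 - ex - ey)/2) ((ey - ex)/2))
        - binEnt (m11 + m22)) := by
  set a := (1 - ex - ey) / 2 with ha
  set b := (ey - ex) / 2 with hb
  have t0 : rhoGen m00 m11 m22 m33 a b (0,0) (0,0) = (m00 : ℂ) := by simp [rhoGen]
  have t1 : rhoGen m00 m11 m22 m33 a b (0,1) (0,1) = (m11 : ℂ) := by simp [rhoGen]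
  have t2 : rhoGen m00 m11 m22 m33 a b (1,0) (1,0) = (m22 : ℂ) := by simp [rhoGen]
  have t3 : rhoGen m00 m11 m22 m33 a b (1,1) (1,1) = (m33 : ℂ) := by simp [rhoGen]
  have ta : rhoGen m00 m11 m22 m33 a b (0,0) (1,1) = (a : ℂ) := by simp [rhoGen]
  have ta' : rhoGen m00 m11 m22 m33 a b (1,1) (0,0) = (a : ℂ) := by simp [rhoGen]
  have tb : rhoGen m00 m11 m22 m33 a b (0,1) (1,0) = (b : ℂ) := by simp [rhoGen]
  have tb' : rhoGen m00 m11 m22 m33 a b (1,0) (0,1) = (b : ℂ) := by simp [rhoGen]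
  have htr : (rhoGen m00 m11 m22 m33 a b).trace = 1 := by
    simp only [Matrix.trace, Matrix.diag_apply, Fintype.sum_prod_type, Fin.sum_univ_two,
      t0, t1, t2, t3]
    norm_cast
    linarith
  have hpsd : (rhoGen m00 m11 m22 m33 a b).PosSemidef := by
    obtain ⟨ρ, hρ, r0, r1, r2, r3, hx, hy⟩ := hne
    obtain ⟨ea, eb⟩ := re_coherences hρ hx hy
    rw [rhoGen_eq hρ.1.1 r0 r1 r2 r3 ea eb]
    have hd := dephase_posSemidef hρ.1
    exact (hd.add hd.transpose).smul (by norm_num)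
  have hX : (PiXMinus * rhoGen m00 m11 m22 m33 a b).trace = (ex : ℂ) := by
    rw [trace_PiXMinus_mul, htr, ta, ta', tb, tb', ha, hb]
    push_cast
    ring
  have hY : (PiYMinus * rhoGen m00 m11 m22 m33 a b).trace = (ey : ℂ) := by
    rw [trace_PiYMinus_mul, htr, ta, ta', tb, tb', ha, hb]
    push_cast
    ring
  have hmin : ∀ ρ : Matrix Q2 Q2 ℂ, IsDensity ρ →
      ρ (0,0) (0,0) = (m00 : ℂ) → ρ (0,1) (0,1) = (m11 : ℂ) →
      ρ (1,0) (1,0) = (m22 : ℂ) → ρ (1,1) (1,1) = (m33 : ℂ) →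
      (PiXMinus * ρ).trace = (ex : ℂ) → (PiYMinus * ρ).trace = (ey : ℂ) →
      relEntCoh (rhoGen m00 m11 m22 m33 a b) ≤ relEntCoh (dephase ρ) := by
    intro ρ hρ r0 r1 r2 r3 hx hy
    obtain ⟨ea, eb⟩ := re_coherences hρ hx hy
    have hdiag : diagPart (rhoGen m00 m11 m22 m33 a b) = diagPart (dephase ρ) := by
      refine congrArg Matrix.diagonal (funext fun i => ?_)
      rw [dephase_apply, if_pos Iff.rfl]
      obtain ⟨i1, i2⟩ := i
      fin_cases i1 <;> fin_cases i2
      exacts [t0.trans r0.symm, t1.trans r1.symm, t2.trans r2.symm, t3.trans r3.symm]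
    have g1 := normSq_le_of_posSemidef hρ.1 (0,0) (1,1)
    have g2 := normSq_le_of_posSemidef hρ.1 (0,1) (1,0)
    simp only [r0, r1, r2, r3, Complex.ofReal_re] at g1 g2
    rw [relEntCoh, relEntCoh, hdiag, vnEntropy_dephase hρ.1 r0 r1 r2 r3,
      ← dephase_rhoGen m00 m11 m22 m33 a b, vnEntropy_dephase hpsd t0 t1 t2 t3, ta, tb, ha, hb,
      ← ea, ← eb]
    refine sub_le_sub_left (add_le_add ?_ ?_) _
    · exact blockEntropy_anti (Real.sqrt_nonneg _) (gap_re_le _ _ _) (gap_le h00 h33 g1)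
    · exact blockEntropy_anti (Real.sqrt_nonneg _) (gap_re_le _ _ _) (gap_le h11 h22 g2)
  refine ⟨⟨⟨hpsd, htr⟩, hX, hY⟩, hmin, ?_, ?_⟩
  · exact ⟨_, ⟨hpsd, htr⟩, t0, t1, t2, t3, hX, hY, by rw [dephase_rhoGen]⟩
  · rintro _ ⟨ρ, hρ, r0, r1, r2, r3, hx, hy, rfl⟩
    exact sub_le_sub_right (hmin ρ hρ r0 r1 r2 r3 hx hy) _

end
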